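/- If S ⊆ [m] is a fair set w.r.t. γ, then the fairlet size c̃ divides |S|; in particular, every nonempty fair set has at least c̃ elements. -/

import Mathlib

variable {m c : ℕ}

/-- The number of occurrences of color `z` in the coloring `γ`. -/
def colorCount (γ : Fin m → Fin c) (z : Fin c) : ℕ :=
  (Finset.univ.filter (fun i => γ i = z)).card

/-- A set of rows is fair w.r.t. `γ` if it witnesses the same color distribution as `γ`. -/
def fairSet (γ : Fin m → Fin c) (S : Finset (Fin m)) : Prop :=
  ∀ z : Fin c, m * (S.filter (fun i => γ i = z)).card = colorCount γ z * S.card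

/-- The fairlet size `c̃ = m / gcd(|γ|_1, …, |γ|_c)`. -/
def fairletSize (γ : Fin m → Fin c) : ℕ :=
  m / Finset.univ.gcd (colorCount γ)

/-- The color counts add up to the number of colored elements. -/
theorem sum_colorCount (γ : Fin m → Fin c) : ∑ z, colorCount γ z = m := by
  simpa [colorCount] using
    (Finset.card_eq_sum_card_fiberwise (f := γ) (s := Finset.univ) (t := Finset.univ)
      (fun _ _ => by simp)).symm

theorem gcd_colorCount_dvd (γ : Fin m → Fin c) : Finset.univ.gcd (colorCount γ) ∣ m := by
  conv_rhs => rw [← sum_colorCount γ]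
  exact Finset.dvd_sum fun z hz => Finset.gcd_dvd hz

/-- The fairlet size divides the cardinality of every fair set;
in particular every nonempty fair set has at least `c̃` elements. -/
theorem fairletSize_dvd_card_of_fair (hm : 0 < m) (γ : Fin m → Fin c)
    (hγ : Function.Surjective γ) (S : Finset (Fin m)) (hS : fairSet γ S) :
    fairletSize γ ∣ S.card ∧ (S.Nonempty → fairletSize γ ≤ S.card) := by
  have hdvd : fairletSize γ ∣ S.card := by
    have hmul : m ∣ Finset.univ.gcd (colorCount γ) * S.card := by
      rw [← normalize_eq S.card, ← Finset.gcd_mul_right]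
      exact Finset.dvd_gcd fun z _ => Dvd.intro _ (hS z)
    have hpos := Nat.pos_of_dvd_of_pos (gcd_colorCount_dvd γ) hm
    refine Nat.dvd_of_mul_dvd_mul_left hpos ?_
    rwa [fairletSize, Nat.mul_div_cancel' (gcd_colorCount_dvd γ)]
  exact ⟨hdvd, fun hne => Nat.le_of_dvd hne.card_pos hdvd⟩
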